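/- Let d ≥ 2, r > 0, v ∈ ℝ^d and U ∈ S₀^{d×d}, and suppose that v⊗v − U ≤ (r/d)·I_d, where for symmetric matrices A ≤ B means B − A is positive semidefinite. Then |v|² ≤ r and the operator norm of U satisfies ‖U‖ ≤ r. -/

import Mathlib

noncomputable section

/-- Vectors in ℝ^d. -/
abbrev Vec (d : ℕ) := Fin d → ℝ

/-- The operator (spectral) norm of a real d×d matrix, i.e. the norm of the induced
linear map between Euclidean spaces. -/
def opNorm {d : ℕ} (U : Matrix (Fin d) (Fin d) ℝ) : ℝ :=
  ‖LinearMap.toContinuousLinearMap (Matrix.toEuclideanLin U)‖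

/- Since `v ⊗ v ≥ 0`, the hypothesis gives `-(r/d) I ≤ U`, so the numbers `λ + r/d`, with `λ`
running over the eigenvalues of `U`, are nonnegative. Their sum is `tr U + r = r`, so each of them
is at most `r`, whence `-r ≤ -r/d ≤ λ ≤ r`; and the operator norm of a symmetric matrix is its
largest `|λ|`. Taking traces in `v ⊗ v - U ≤ (r/d) I` bounds `|v|²`. -/

theorem pi_norm_le_card_mul_of_sum_nonpos {ι : Type*} [Fintype ι] {f : ι → ℝ} {c : ℝ}
    (hf : ∀ i, -c ≤ f i) (hsum : ∑ i, f i ≤ 0) : ‖f‖ ≤ Fintype.card ι * c := by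
  have hsum_add : ∑ i, (f i + c) ≤ Fintype.card ι * c := by
    simpa [Finset.sum_add_distrib] using hsum
  have hnonneg : ∀ i ∈ Finset.univ, 0 ≤ f i + c := fun i _ ↦ neg_le_iff_add_nonneg.mp (hf i)
  have hcard_mul : 0 ≤ Fintype.card ι * c := (Finset.sum_nonneg hnonneg).trans hsum_add
  refine (pi_norm_le_iff_of_nonneg hcard_mul).mpr fun i ↦ ?_
  have hcard : (1 : ℝ) ≤ Fintype.card ι := by exact_mod_cast Fintype.card_pos_iff.mpr ⟨i⟩
  have hc : 0 ≤ c := nonneg_of_mul_nonneg_right hcard_mul (zero_lt_one.trans_le hcard)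
  have hc_le : c ≤ Fintype.card ι * c := le_mul_of_one_le_left hc hcard
  have hle : f i + c ≤ Fintype.card ι * c :=
    (Finset.single_le_sum hnonneg (Finset.mem_univ i)).trans hsum_add
  exact abs_le.mpr ⟨(neg_le_neg hc_le).trans (hf i), (le_add_of_nonneg_right hc).trans hle⟩

section Loewner

open Matrix
open scoped ComplexOrder MatrixOrder Matrix.Norms.L2Operator

variable {𝕜 n : Type*} [RCLike 𝕜]

theorem neg_smul_one_le_of_vecMulVec_sub_le [Finite n] [DecidableEq n] {A : Matrix n n 𝕜} {c : ℝ}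
    {v : n → 𝕜} (h : vecMulVec v (star v) - A ≤ c • 1) : -c • 1 ≤ A := by
  have hv : 0 ≤ vecMulVec v (star v) := (posSemidef_vecMulVec_self_star v).nonneg
  calc -c • 1 = -(c • 1) := neg_smul c 1
    _ ≤ vecMulVec v (star v) - c • 1 := by simpa [sub_eq_add_neg] using hv
    _ ≤ A := sub_le_comm.mp h

variable [Fintype n]

theorem re_trace_vecMulVec_self_star (v : n → 𝕜) :
    RCLike.re (vecMulVec v (star v)).trace = ∑ i, ‖v i‖ ^ 2 := by
  simp only [trace_vecMulVec, dotProduct, Pi.star_apply, RCLike.star_def, RCLike.mul_conj,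
    ← RCLike.ofReal_pow, map_sum, RCLike.ofReal_re]

theorem re_trace_mono {A B : Matrix n n 𝕜} (h : A ≤ B) :
    RCLike.re A.trace ≤ RCLike.re B.trace := by
  have htrace : A.trace ≤ B.trace := by
    simpa only [trace_sub, sub_nonneg] using (le_iff.mp h).trace_nonneg
  exact RCLike.re_monotone htrace

variable [DecidableEq n] {A : Matrix n n 𝕜} {c : ℝ}

theorem l2_opNorm_eq_norm_eigenvalues (hA : A.IsHermitian) : ‖A‖ = ‖hA.eigenvalues‖ := by
  conv_lhs => rw [hA.spectral_theorem, Unitary.conjStarAlgAut_apply, ← Unitary.coe_star,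
    CStarRing.norm_mul_coe_unitary, CStarRing.norm_coe_unitary_mul, l2_opNorm_diagonal]
  simp [Pi.norm_def]

theorem le_eigenvalues_of_smul_one_le (hA : A.IsHermitian) (h : c • 1 ≤ A) (i : n) :
    c ≤ hA.eigenvalues i := by
  rw [← Algebra.algebraMap_eq_smul_one, algebraMap_le_iff_le_spectrum] at h
  exact h _ (hA.eigenvalues_mem_spectrum_real i)

theorem l2_opNorm_le_card_mul_of_re_trace_nonpos (htr : RCLike.re A.trace ≤ 0)
    (h : -c • 1 ≤ A) : ‖A‖ ≤ Fintype.card n * c := by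
  have hA : A.IsHermitian := IsSelfAdjoint.of_ge h (.smul (.all _) (.one _))
  have hsum : ∑ i, hA.eigenvalues i ≤ 0 := by
    simpa [hA.trace_eq_sum_eigenvalues] using htr
  rw [l2_opNorm_eq_norm_eigenvalues hA]
  exact pi_norm_le_card_mul_of_sum_nonpos (le_eigenvalues_of_smul_one_le hA h) hsum

theorem sum_norm_sq_le_of_vecMulVec_sub_le {v : n → 𝕜}
    (h : vecMulVec v (star v) - A ≤ c • 1) :
    ∑ i, ‖v i‖ ^ 2 ≤ RCLike.re A.trace + Fintype.card n * c := by
  have htrace := re_trace_mono h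
  rw [trace_sub, map_sub, re_trace_vecMulVec_self_star, trace_smul, trace_one, RCLike.smul_re,
    RCLike.natCast_re] at htrace
  linarith

theorem le_smul_one_of_quadraticForm_le {A : Matrix n n ℝ} (hA : A.IsHermitian)
    (h : ∀ ξ : n → ℝ, ∑ i, ∑ j, A i j * ξ i * ξ j ≤ c * ∑ i, ξ i ^ 2) : A ≤ c • 1 := by
  have hsub : (c • 1 - A).IsHermitian := (isHermitian_one.smul (.all c)).sub hA
  have hquad (ξ : n → ℝ) : star ξ ⬝ᵥ (c • 1 - A) *ᵥ ξ
      = c * ∑ i, ξ i ^ 2 - ∑ i, ∑ j, A i j * ξ i * ξ j := by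
    rw [sub_mulVec, smul_mulVec, one_mulVec, dotProduct_sub, dotProduct_smul]
    simp [dotProduct, mulVec, Finset.mul_sum, pow_two, mul_left_comm, mul_comm]
  exact le_iff.mpr <| .of_dotProduct_mulVec_nonneg hsub fun ξ ↦ by
    rw [hquad]
    exact sub_nonneg.mpr (h ξ)

theorem vecMulVec_sub_le_smul_one_of_quadraticForm_le {U : Matrix n n ℝ} {v : n → ℝ}
    (hU : U.IsHermitian)
    (h : ∀ ξ : n → ℝ, ∑ i, ∑ j, (v i * v j - U i j) * ξ i * ξ j ≤ c * ∑ i, ξ i ^ 2) :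
    vecMulVec v (star v) - U ≤ c • 1 :=
  le_smul_one_of_quadraticForm_le ((posSemidef_vecMulVec_self_star v).isHermitian.sub hU) h

theorem opNorm_eq_l2_opNorm {d : ℕ} (U : Matrix (Fin d) (Fin d) ℝ) : opNorm U = ‖U‖ := rfl

theorem stmt12_general [Nonempty n] {r : ℝ} {v : n → 𝕜} {U : Matrix n n 𝕜}
    (htr : RCLike.re U.trace ≤ 0)
    (h : vecMulVec v (star v) - U ≤ (r / Fintype.card n) • 1) :
    ∑ i, ‖v i‖ ^ 2 ≤ r ∧ ‖U‖ ≤ r := by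
  have hcard : (Fintype.card n : ℝ) * (r / Fintype.card n) = r :=
    mul_div_cancel₀ r (by positivity)
  constructor
  · linarith [sum_norm_sq_le_of_vecMulVec_sub_le h]
  · have hU : -(r / Fintype.card n) • 1 ≤ U := neg_smul_one_le_of_vecMulVec_sub_le h
    exact (l2_opNorm_le_card_mul_of_re_trace_nonpos htr hU).trans_eq hcard

end Loewner

/-- Let `d ≥ 2`, `r > 0`, `v ∈ ℝ^d`, `U ∈ S₀^{d×d}` with
`v⊗v − U ≤ (r/d)·I_d` (i.e. `ξᵀ(v⊗v − U)ξ ≤ (r/d)|ξ|²` for all `ξ`).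
Then `|v|² ≤ r` and the operator norm of `U` satisfies `‖U‖ ≤ r`. -/
theorem stmt12 (d : ℕ) (hd : 2 ≤ d) (r : ℝ) (hr : 0 < r)
    (v : Vec d) (U : Matrix (Fin d) (Fin d) ℝ)
    (hsymm : ∀ i j, U i j = U j i) (htr : ∑ i, U i i = 0)
    (hpsd : ∀ ξ : Vec d,
      ∑ i, ∑ j, (v i * v j - U i j) * ξ i * ξ j ≤ (r / d) * ∑ i, (ξ i) ^ 2) :
    (∑ i, (v i) ^ 2 ≤ r) ∧ opNorm U ≤ r := by
  have : NeZero d := ⟨by lia⟩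
  have hle := vecMulVec_sub_le_smul_one_of_quadraticForm_le (.ext fun i j ↦ hsymm j i) hpsd
  simpa [opNorm_eq_l2_opNorm] using stmt12_general (U := U) htr.le (by rwa [Fintype.card_fin])
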